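/- Let d, k be positive integers with k ≥ 2, and let K ∈ ℕ⁺ be arbitrary. Set ℓ = ⌈log_k K⌉, L ≥ ℓ, n₁ = ⋯ = n_L = 2(k+1)n, and B = (k/2 + 1)⁴. Then k^ℓ ≥ K, and there is a constant C independent of n such that sup_{f ∈ 𝒦₁(ℙ_{k^ℓ}^d)} inf_{f_n ∈ Σ_{n_{1:L}}^k(B)} ‖f − f_n‖_{L²(𝔹ᵈ)} ≤ C ‖f‖_{𝒦₁(ℙ_{k^ℓ}^d)} · n^{−1/2 − (2K+1)/(2d)}; that is, a deep ReLUᵏ network of depth L ≥ ⌈log_k K⌉ achieves at least the rate n^{−1/2 − (2K+1)/(2d)} on the variation space 𝒦₁(ℙ_{k^ℓ}^d), without the architecture depending on K beyond the depth requirement. -/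

import Mathlib

/-!
Write `M = k^ℓ`, so that `K ≤ M ≤ k^L`.  It suffices to approximate finite sums `p = ∑ a_j h_j` with
`h_j ∈ ℙ_M^d` and `∑ |a_j| ≤ R`, because these come arbitrarily close to `f`.

**Interpolation in the parameter.**  A neuron is `σ_M(θ 0 + ∑ θ_i x_i)` with parameter
`θ ∈ ℝ^{d+1}`.  By homogeneity `θ` may be moved to a face of the cube `[-1,1]^{d+1}`, which is a
`d`-dimensional parameter set.  On a grid of spacing `1/q` of that face, tensor-product Lagrange
interpolation of degree `M` in each variable approximates `θ ↦ σ_M(θ 0 + ∑ θ_i x_i)`.  It is exact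
for those `x` at which the affine form keeps its sign on the stencil, as the neuron is then a
polynomial in `θ`.  The other `x` lie in a strip of volume `O(1/q)`, in which all the values are
`O(q^{-M})`.  So every dictionary element is within `O(q^{-M-1/2})` in `L²(𝔹ᵈ)` of the span of
`O(q^d)` grid neurons that do not depend on it (`exists_grid_approx`).

**Sampling.**  Maurey's argument applied to the remainders, which have norm `O(q^{-M-1/2})`, replaces
`∑ a_j h_j` by `N` sampled dictionary elements plus grid neurons with error
`O(R q^{-M-1/2} N^{-1/2})` (`exists_shallow_approx`).  With `q ~ n^{1/d}` and `N ~ n` this is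
`O(R n^{-1/2-(2M+1)/(2d)})`, and `K ≤ M`.

**Depth.**  A network with diagonal inner layers applies `σ_k` repeatedly to each coordinate, and
`σ_k ∘ ⋯ ∘ σ_k = σ_{k^L}`.  Thus depth `L` realises shallow networks with activation `σ_{k^L}`
(`mem_deepClass`).  If `M < k^L`, then `σ_M` is a uniform limit of iterated difference quotients of
`σ_{k^L}`, which use `2^D` translates each, `D = k^L - M` (`exists_lift_power`).  The output weights
blow up, but those are unconstrained, and the inner weights stay bounded by `4 ≤ (k/2+1)⁴`.  The
factor `2^D` in the width is absorbed in the constant, since `q` and `N` may be chosen smaller by a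
constant factor.
-/

open MeasureTheory
open scoped Classical ENNReal

/-- The ReLU^k activation function: `σ_k(x) = x^k` for `x ≥ 0` and `0` for `x < 0`. -/
noncomputable def relupow (k : ℕ) (x : ℝ) : ℝ := if 0 ≤ x then x ^ k else 0

/-- Hidden layers of a fully-connected deep ReLU^k network of constant width `W` on `ℝᵈ`:
`deepLayers k d W A1 b1 A b m x = h_{m+1}(x)` where `h₁(x) = σ_k(A₁ x + b₁)` and
`h_{i+2}(x) = σ_k(A_{i+2} h_{i+1}(x) + b_{i+2})` (here `A i`, `b i` encode `A_{i+2}`, `b_{i+2}`). -/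
noncomputable def deepLayers (k d W : ℕ)
    (A1 : Matrix (Fin W) (Fin d) ℝ) (b1 : Fin W → ℝ)
    (A : ℕ → Matrix (Fin W) (Fin W) ℝ) (b : ℕ → Fin W → ℝ) :
    ℕ → (Fin d → ℝ) → (Fin W → ℝ)
  | 0, x, j => relupow k ((∑ i, A1 j i * x i) + b1 j)
  | m + 1, x, j =>
      relupow k ((∑ i, A m j i * deepLayers k d W A1 b1 A b m x i) + b m j)

/-- The class `Σ_{n_{1:L}}^k(B)` of deep ReLU^k networks of depth `L`, constant width `W`,
inner weights and biases bounded by `B`, and unconstrained output vector. -/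
def DeepReLUkClass (k d W L : ℕ) (B : ℝ) : Set ((Fin d → ℝ) → ℝ) :=
  {g | ∃ (A1 : Matrix (Fin W) (Fin d) ℝ) (b1 : Fin W → ℝ)
        (A : ℕ → Matrix (Fin W) (Fin W) ℝ) (b : ℕ → Fin W → ℝ) (c : Fin W → ℝ),
      (∀ i j, |A1 i j| ≤ B) ∧ (∀ i, |b1 i| ≤ B) ∧
      (∀ m, m < L - 1 → (∀ i j, |A m i j| ≤ B) ∧ (∀ i, |b m i| ≤ B)) ∧
      g = fun x => ∑ j, c j * deepLayers k d W A1 b1 A b (L - 1) x j}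

/-- The dictionary `ℙ_K^d = { x ↦ σ_K(ω·x + b) : ω ∈ 𝕊^{d−1}, b ∈ [−1,1] }`. -/
def dictP (d K : ℕ) : Set ((Fin d → ℝ) → ℝ) :=
  {g | ∃ (ω : Fin d → ℝ) (b : ℝ), (∑ i, (ω i) ^ 2 = 1) ∧ |b| ≤ 1 ∧
      g = fun x => relupow K ((∑ i, ω i * x i) + b)}

/-- `f` belongs to `R · cl(conv(±ℙ_K^d))`, the closure being taken in `L²(𝔹ᵈ)`:
`f` can be approximated arbitrarily well in `L²(𝔹ᵈ)` by finite linear combinations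
`Σ a_j h_j` of dictionary elements with `Σ |a_j| ≤ R`.  In particular
`‖f‖_{𝒦₁(ℙ_K^d)} ≤ R` in the variation space `𝒦₁(ℙ_K^d)`. -/
def memVariationBall (d K : ℕ) (R : ℝ) (f : (Fin d → ℝ) → ℝ) : Prop :=
  ∀ ε : ℝ, 0 < ε →
    ∃ (m : ℕ) (a : Fin m → ℝ) (h : Fin m → ((Fin d → ℝ) → ℝ)),
      (∀ j, h j ∈ dictP d K) ∧ (∑ j, |a j|) ≤ R ∧
      eLpNorm (f - fun x => ∑ j, a j * h j x) 2
          (volume.restrict {x : Fin d → ℝ | ∑ i, (x i) ^ 2 ≤ 1})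
        ≤ ENNReal.ofReal ε



namespace AdaptiveReLU

/-- The measure underlying `L²(𝔹ᵈ)`: Lebesgue measure restricted to the Euclidean unit ball. -/
noncomputable abbrev ballMeasure (d : ℕ) : Measure (Fin d → ℝ) :=
  volume.restrict {x : Fin d → ℝ | ∑ i, (x i) ^ 2 ≤ 1}

/-- The affine form `x ↦ θ₀ + ∑ θ_{i+1} xᵢ`; a parameter `(ω, b)` of the dictionary is stored as
one vector `θ = (b, ω)`. -/
noncomputable def lin {d : ℕ} (θ : Fin (d + 1) → ℝ) (x : Fin d → ℝ) : ℝ :=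
  θ 0 + ∑ i, θ i.succ * x i

/-- The ridge function `x ↦ σ_k(θ₀ + ∑ θ_{i+1} xᵢ)`. -/
noncomputable def neuron (k : ℕ) {d : ℕ} (θ : Fin (d + 1) → ℝ) (x : Fin d → ℝ) : ℝ :=
  relupow k (lin θ x)

/-! ### The activation function -/

lemma relupow_eq_max {k : ℕ} (hk : 1 ≤ k) (t : ℝ) : relupow k t = (max t 0) ^ k := by
  unfold relupow
  split_ifs with h
  · rw [max_eq_left h]
  · rw [max_eq_right (not_le.mp h).le, zero_pow (by omega)]

lemma relupow_nonneg (k : ℕ) (t : ℝ) : 0 ≤ relupow k t := by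
  unfold relupow; split_ifs with h
  · positivity
  · exact le_rfl

lemma continuous_relupow {k : ℕ} (hk : 1 ≤ k) : Continuous (relupow k) := by
  have : relupow k = fun t => (max t 0) ^ k := funext (relupow_eq_max hk)
  rw [this]; fun_prop

lemma relupow_mul {k : ℕ} {c : ℝ} (hc : 0 < c) (t : ℝ) :
    relupow k (c * t) = c ^ k * relupow k t := by
  unfold relupow
  by_cases h : 0 ≤ t
  · rw [if_pos h, if_pos (by positivity), mul_pow]
  · rw [if_neg h, if_neg (by rw [not_le] at h ⊢; exact mul_neg_of_pos_of_neg hc h), mul_zero]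

lemma relupow_comp {k S : ℕ} (hk : 1 ≤ k) (hS : 1 ≤ S) (t : ℝ) :
    relupow k (relupow S t) = relupow (S * k) t := by
  have h1 : 1 ≤ S * k := Nat.mul_pos hS hk
  rw [relupow_eq_max hk, relupow_eq_max hS, relupow_eq_max h1,
    max_eq_left (by positivity), pow_mul]

lemma abs_relupow_le {k : ℕ} (hk : 1 ≤ k) {t T : ℝ} (h : |t| ≤ T) : |relupow k t| ≤ T ^ k := by
  rw [abs_of_nonneg (relupow_nonneg k t), relupow_eq_max hk]
  have h1 := abs_le.mp h
  exact pow_le_pow_left₀ (le_max_right _ _) (max_le h1.2 ((abs_nonneg t).trans h)) k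

lemma continuous_lin {d : ℕ} (θ : Fin (d + 1) → ℝ) : Continuous (lin θ) := by
  unfold lin; fun_prop

lemma continuous_neuron {k d : ℕ} (hk : 1 ≤ k) (θ : Fin (d + 1) → ℝ) :
    Continuous (neuron k θ) :=
  (continuous_relupow hk).comp (continuous_lin θ)

lemma abs_coord_le {d : ℕ} {x : Fin d → ℝ} (hx : ∑ i, (x i) ^ 2 ≤ 1) (i : Fin d) : |x i| ≤ 1 := by
  have : x i ^ 2 ≤ ∑ i, (x i) ^ 2 :=
    Finset.single_le_sum (f := fun i => x i ^ 2) (fun i _ => sq_nonneg _) (Finset.mem_univ i)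
  exact sq_le_one_iff_abs_le_one _ |>.mp (this.trans hx)

lemma lin_eq_sum {d : ℕ} (θ : Fin (d + 1) → ℝ) (x : Fin d → ℝ) :
    lin θ x = ∑ j, θ j * (Fin.cons 1 x : Fin (d + 1) → ℝ) j := by
  simp [lin, Fin.sum_univ_succ]

lemma abs_cons_le {d : ℕ} {x : Fin d → ℝ} (hx : ∑ i, (x i) ^ 2 ≤ 1) (j : Fin (d + 1)) :
    |(Fin.cons 1 x : Fin (d + 1) → ℝ) j| ≤ 1 := by
  refine Fin.cases ?_ (fun i => ?_) j
  · simp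
  · simpa using abs_coord_le hx i

/-- On the unit ball the affine form is Lipschitz in its parameter. -/
lemma abs_lin_sub_le {d : ℕ} {θ θ' : Fin (d + 1) → ℝ} {x : Fin d → ℝ} {η : ℝ}
    (hx : ∑ i, (x i) ^ 2 ≤ 1) (h : ∀ j, |θ j - θ' j| ≤ η) :
    |lin θ x - lin θ' x| ≤ (d + 1) * η := by
  rw [lin_eq_sum, lin_eq_sum, ← Finset.sum_sub_distrib]
  calc _ ≤ ∑ j : Fin (d + 1), η := by
        refine (Finset.abs_sum_le_sum_abs _ _).trans (Finset.sum_le_sum fun j _ => ?_)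
        rw [← sub_mul, abs_mul]
        have := abs_cons_le hx j
        calc _ ≤ |θ j - θ' j| * 1 := by gcongr
          _ ≤ η := by simpa using h j
    _ = _ := by simp

lemma abs_lin_le {d : ℕ} {θ : Fin (d + 1) → ℝ} {x : Fin d → ℝ} {T : ℝ}
    (hx : ∑ i, (x i) ^ 2 ≤ 1) (h : ∀ j, |θ j| ≤ T) : |lin θ x| ≤ (d + 1) * T := by
  have := abs_lin_sub_le (θ' := fun _ => 0) hx (by simpa using h)
  simpa [lin] using this

lemma measurableSet_ball (d : ℕ) : MeasurableSet {x : Fin d → ℝ | ∑ i, (x i) ^ 2 ≤ 1} :=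
  (isClosed_le (by fun_prop) continuous_const).measurableSet

lemma ball_subset (d : ℕ) :
    {x : Fin d → ℝ | ∑ i, (x i) ^ 2 ≤ 1} ⊆ Set.Icc (fun _ => -1) (fun _ => 1) := by
  intro x hx
  exact ⟨fun i => (abs_le.mp (abs_coord_le hx i)).1, fun i => (abs_le.mp (abs_coord_le hx i)).2⟩

instance (d : ℕ) : IsFiniteMeasure (ballMeasure d) := by
  refine ⟨?_⟩
  rw [Measure.restrict_apply_univ]
  exact (measure_mono (ball_subset d)).trans_lt isCompact_Icc.measure_lt_top

lemma ae_ball (d : ℕ) : ∀ᵐ x ∂(ballMeasure d), ∑ i, (x i) ^ 2 ≤ 1 :=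
  ae_restrict_mem (measurableSet_ball d)

lemma exists_param_of_dict {d K : ℕ} {h : (Fin d → ℝ) → ℝ} (hh : h ∈ dictP d K) :
    ∃ θ : Fin (d + 1) → ℝ, |θ 0| ≤ 1 ∧ ∑ i : Fin d, θ i.succ ^ 2 = 1 ∧ h = neuron K θ := by
  obtain ⟨ω, b, hω, hb, rfl⟩ := hh
  refine ⟨Fin.cons b ω, by simpa using hb, by simpa using hω, ?_⟩
  funext x
  simp [neuron, lin, add_comm]

/-! ### Norm inequalities in `L²` -/

/-- Minkowski's inequality when only the second summand is known to be measurable; the norm of a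
nonmeasurable function is a lower integral. -/
lemma eLpNorm_add_le_of_right {α : Type*} [MeasurableSpace α] {μ : Measure α} {u v : α → ℝ}
    (hv : Measurable v) : eLpNorm (u + v) 2 μ ≤ eLpNorm u 2 μ + eLpNorm v 2 μ := by
  have key : ∀ w : α → ℝ, eLpNorm w 2 μ = (∫⁻ x, ‖w x‖ₑ ^ (2 : ℝ) ∂μ) ^ (1 / (2 : ℝ)) := by
    intro w
    rw [eLpNorm_eq_lintegral_rpow_enorm_toReal (by norm_num) (by norm_num)]
    norm_num
  obtain ⟨φ, hφ, hle, hφe⟩ := exists_measurable_le_lintegral_eq μ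
    (fun x => ‖(u + v) x‖ₑ ^ (2 : ℝ))
  have hs : ∀ x, φ x ^ (1 / (2 : ℝ)) ≤ ‖u x‖ₑ + ‖v x‖ₑ := by
    intro x
    calc φ x ^ (1 / (2 : ℝ)) ≤ (‖(u + v) x‖ₑ ^ (2 : ℝ)) ^ (1 / (2 : ℝ)) :=
          ENNReal.rpow_le_rpow (hle x) (by norm_num)
      _ = ‖(u + v) x‖ₑ := by rw [← ENNReal.rpow_mul]; norm_num
      _ ≤ _ := enorm_add_le _ _
  -- `ψ = √φ - |v|` is a measurable minorant of `|u|`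
  set ψ : α → ℝ≥0∞ := fun x => φ x ^ (1 / (2 : ℝ)) - ‖v x‖ₑ with hψ
  have hψm : Measurable ψ := (hφ.pow_const _).sub hv.enorm
  rw [key, key, key, hφe]
  calc (∫⁻ x, φ x ∂μ) ^ (1 / (2 : ℝ))
      ≤ (∫⁻ x, (ψ + fun x => ‖v x‖ₑ) x ^ (2 : ℝ) ∂μ) ^ (1 / (2 : ℝ)) := by
        refine ENNReal.rpow_le_rpow (lintegral_mono fun x => ?_) (by norm_num)
        calc φ x = (φ x ^ (1 / (2 : ℝ))) ^ (2 : ℝ) := by rw [← ENNReal.rpow_mul]; norm_num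
          _ ≤ _ := ENNReal.rpow_le_rpow (by simp only [Pi.add_apply, hψ]; exact le_tsub_add)
              (by norm_num)
    _ ≤ (∫⁻ x, ψ x ^ (2 : ℝ) ∂μ) ^ (1 / (2 : ℝ)) + (∫⁻ x, ‖v x‖ₑ ^ (2 : ℝ) ∂μ) ^ (1 / (2 : ℝ)) :=
        ENNReal.lintegral_Lp_add_le hψm.aemeasurable hv.enorm.aemeasurable (by norm_num)
    _ ≤ _ := by
        gcongr with x
        exact tsub_le_iff_right.mpr (hs x)

lemma eLpNorm_sub_le_of_uniform {d : ℕ} {u : (Fin d → ℝ) → ℝ} {c : ℝ}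
    (h : ∀ x, ∑ i, (x i) ^ 2 ≤ 1 → |u x| ≤ c) :
    eLpNorm u 2 (ballMeasure d) ≤
      (ballMeasure d Set.univ) ^ (1 / (2 : ℝ)) * ENNReal.ofReal c := by
  have := eLpNorm_le_of_ae_bound (p := 2) (μ := ballMeasure d) (f := u) (C := c)
    (by filter_upwards [ae_ball d] with x hx using h x hx)
  simpa using this

/-! ### Maurey's sampling argument -/

/-- A convex combination of vectors of norm at most `T` is within `T / √N` of an average of `N` of
them.  The vectors are selected one at a time: averaging `‖e + f - u_j‖²` over `j`, the cross term
vanishes, so some `j` increases the squared error by at most `T²`. -/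
lemma maurey_convex {H : Type*} [NormedAddCommGroup H] [InnerProductSpace ℝ H] {ι : Type*}
    [Fintype ι] (p : ι → ℝ) (u : ι → H) (T : ℝ) (hp : ∀ j, 0 ≤ p j) (hp1 : ∑ j, p j = 1)
    (hu : ∀ j, ‖u j‖ ≤ T) (N : ℕ) :
    ∃ idx : Fin N → ι, ‖(N : ℝ) • (∑ j, p j • u j) - ∑ i, u (idx i)‖ ^ 2 ≤ N * T ^ 2 := by
  set f := ∑ j, p j • u j with hf
  induction N with
  | zero => exact ⟨Fin.elim0, by simp⟩
  | succ N ih =>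
    obtain ⟨idx, hidx⟩ := ih
    set e := (N : ℝ) • f - ∑ i, u (idx i) with he
    have havg : ∑ j, p j * ‖e + f - u j‖ ^ 2 ≤ ‖e‖ ^ 2 + T ^ 2 := by
      have h1 : ∀ j, p j * ‖e + f - u j‖ ^ 2 =
          p j * ‖e + f‖ ^ 2 - 2 * (inner ℝ (e + f) (p j • u j)) + p j * ‖u j‖ ^ 2 := by
        intro j
        rw [norm_sub_sq_real, real_inner_smul_right]; ring
      simp_rw [h1]
      rw [Finset.sum_add_distrib, Finset.sum_sub_distrib, ← Finset.sum_mul, hp1,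
        ← Finset.mul_sum, ← inner_sum, ← hf]
      have h2 : ∑ j, p j * ‖u j‖ ^ 2 ≤ T ^ 2 := by
        calc _ ≤ ∑ j, p j * T ^ 2 := by
              gcongr with j
              · exact hp j
              · exact hu j
          _ = T ^ 2 := by rw [← Finset.sum_mul, hp1, one_mul]
      have h3 : (1 : ℝ) * ‖e + f‖ ^ 2 - 2 * inner ℝ (e + f) f = ‖e‖ ^ 2 - ‖f‖ ^ 2 := by
        rw [norm_add_sq_real, inner_add_left, real_inner_self_eq_norm_sq]; ring
      nlinarith [sq_nonneg ‖f‖]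
    obtain ⟨j, hj⟩ : ∃ j, ‖e + f - u j‖ ^ 2 ≤ ‖e‖ ^ 2 + T ^ 2 := by
      by_contra! hcon
      have : ∑ j, p j * (‖e‖ ^ 2 + T ^ 2) < ∑ j, p j * ‖e + f - u j‖ ^ 2 := by
        obtain ⟨j₀, hj₀⟩ : ∃ j, 0 < p j := by
          by_contra! h0
          have : ∑ j, p j ≤ 0 := Finset.sum_nonpos fun j _ => h0 j
          linarith
        exact Finset.sum_lt_sum (fun j _ => mul_le_mul_of_nonneg_left (hcon j).le (hp j))
          ⟨j₀, Finset.mem_univ _, mul_lt_mul_of_pos_left (hcon j₀) hj₀⟩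
      rw [← Finset.sum_mul, hp1, one_mul] at this
      linarith
    refine ⟨Fin.snoc idx j, ?_⟩
    have : ((N + 1 : ℕ) : ℝ) • f - ∑ i, u ((Fin.snoc idx j : Fin (N + 1) → ι) i) = e + f - u j := by
      rw [Fin.sum_univ_castSucc]
      simp only [Fin.snoc_castSucc, Fin.snoc_last, he]
      push_cast
      rw [add_smul, one_smul]; abel
    rw [this]
    push_cast
    nlinarith

/-- Maurey's lemma for absolutely convex combinations scaled by `A`. -/
lemma maurey {H : Type*} [NormedAddCommGroup H] [InnerProductSpace ℝ H] {ι : Type*}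
    [Fintype ι] (a : ι → ℝ) (v : ι → H) (A T : ℝ) (hA : ∑ j, |a j| = A) (h0 : 0 < A)
    (hv : ∀ j, ‖v j‖ ≤ T) (N : ℕ) (hN : 0 < N) :
    ∃ (idx : Fin N → ι) (c : Fin N → ℝ),
      ‖(∑ j, a j • v j) - ∑ i, c i • v (idx i)‖ ≤ A * (T / √N) := by
  have hNr : (0 : ℝ) < N := by exact_mod_cast hN
  obtain ⟨idx, hidx⟩ := maurey_convex (fun j => |a j| / A)
    (fun j => (A * SignType.sign (a j)) • v j) (A * T) (fun j => by positivity)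
    (by rw [← Finset.sum_div, hA, div_self h0.ne']) (fun j => by
      rw [norm_smul, norm_mul, Real.norm_of_nonneg h0.le, mul_assoc]
      gcongr
      have hs : ‖((SignType.sign (a j) : SignType) : ℝ)‖ ≤ 1 := by
        rcases lt_trichotomy (a j) 0 with h | h | h <;> simp [h]
      calc _ ≤ 1 * ‖v j‖ := by gcongr
        _ ≤ T := by simpa using hv j) N
  have hsum : ∑ j, (|a j| / A) • (A * (SignType.sign (a j) : ℝ)) • v j = ∑ j, a j • v j := by
    refine Finset.sum_congr rfl fun j _ => ?_
    rw [smul_smul]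
    congr 1
    rw [← mul_assoc, div_mul_cancel₀ _ h0.ne', mul_comm, sign_mul_abs]
  rw [hsum] at hidx
  have hT : 0 ≤ T := (norm_nonneg _).trans (hv (idx ⟨0, hN⟩))
  refine ⟨idx, fun i => (A * SignType.sign (a (idx i))) / N, ?_⟩
  set F : H := ∑ j, a j • v j
  clear_value F
  have h1 : (N : ℝ) • (F - ∑ i, ((A * (SignType.sign (a (idx i)) : ℝ)) / N) • v (idx i)) =
      (N : ℝ) • F - ∑ i, (A * (SignType.sign (a (idx i)) : ℝ)) • v (idx i) := by
    rw [smul_sub, Finset.smul_sum]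
    have hc : ∀ y : ℝ, (N : ℝ) * (y / N) = y := fun y => by field_simp
    simp_rw [smul_smul, hc]
  rw [← h1, norm_smul, Real.norm_of_nonneg hNr.le] at hidx
  refine (sq_le_sq₀ (norm_nonneg _) (by positivity)).mp ?_
  have hsq : (√(N : ℝ)) ^ 2 = N := Real.sq_sqrt hNr.le
  have h2 : (A * (T / √N)) ^ 2 = (N * (A * T) ^ 2) / N ^ 2 := by
    rw [mul_pow, div_pow, hsq]; field_simp
  rw [h2, le_div_iff₀ (by positivity)]
  rw [mul_pow] at hidx
  linarith

/-! ### Piecewise polynomial interpolation in the parameter -/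

/-- Lagrange interpolation at the nodes `0, …, M` reproduces polynomials of degree at most `M`, with
weights that are bounded on `[0, 1]`. -/
lemma exists_lagrange_weights (M : ℕ) :
    ∃ (w : Fin (M + 1) → ℝ → ℝ) (Λ : ℝ), 0 ≤ Λ ∧
      (∀ a u, 0 ≤ u → u ≤ 1 → |w a u| ≤ Λ) ∧
      ∀ p : Polynomial ℝ, p.natDegree ≤ M → ∀ u, ∑ a, w a u * p.eval (a : ℝ) = p.eval u := by
  let v : Fin (M + 1) → ℝ := fun a => (a : ℝ)
  let w : Fin (M + 1) → ℝ → ℝ := fun a u => (Lagrange.basis Finset.univ v a).eval u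
  have hb : ∀ a, ∃ C, ∀ u ∈ Set.Icc (0 : ℝ) 1, ‖w a u‖ ≤ C := fun a =>
    isCompact_Icc.exists_bound_of_continuousOn (Polynomial.continuous _).continuousOn
  choose C hC using hb
  refine ⟨w, ∑ a, |C a|, Finset.sum_nonneg fun a _ => abs_nonneg _, fun a u h0 h1 => ?_,
    fun p hp u => ?_⟩
  · calc |w a u| ≤ C a := hC a u ⟨h0, h1⟩
      _ ≤ |C a| := le_abs_self _
      _ ≤ _ := Finset.single_le_sum (f := fun a => |C a|) (fun a _ => abs_nonneg _)
          (Finset.mem_univ a)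
  · have hinj : Set.InjOn v (Finset.univ : Finset (Fin (M + 1))) := by
      intro a _ b _ hab
      exact Fin.ext (Nat.cast_injective (R := ℝ) hab)
    have := Lagrange.eq_interpolate (s := Finset.univ) (v := v) (f := p) hinj
      (by
        refine (Polynomial.degree_le_natDegree).trans_lt ?_
        rw [Finset.card_univ, Fintype.card_fin]
        exact_mod_cast Nat.lt_succ_of_le hp)
    conv_rhs => rw [this]
    rw [Lagrange.interpolate_apply, Polynomial.eval_finsetSum]
    refine Finset.sum_congr rfl fun a _ => ?_
    simp [w, v, mul_comm]

/-- Tensor products of one-dimensional interpolation formulas of degree `M` reproduce `M`-th powers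
of affine forms. -/
lemma tensor_interpolation {d M : ℕ} {ι : Type*} [Fintype ι] (w τ : Fin d → ι → ℝ) (t : Fin d → ℝ)
    (h : ∀ j, ∀ e ≤ M, ∑ a, w j a * τ j a ^ e = t j ^ e) (y : Fin d → ℝ) (z : ℝ) :
    ∑ α : Fin d → ι, (∏ j, w j (α j)) * (z + ∑ j, τ j (α j) * y j) ^ M =
      (z + ∑ j, t j * y j) ^ M := by
  have hm : ∀ m ≤ M, ∑ α : Fin d → ι, (∏ j, w j (α j)) * (∑ j, τ j (α j) * y j) ^ m =
      (∑ j, t j * y j) ^ m := by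
    intro m hm
    simp_rw [Finset.sum_pow_eq_sum_piAntidiag, Finset.mul_sum]
    rw [Finset.sum_comm]
    refine Finset.sum_congr rfl fun κ hκ => ?_
    have hκ' : ∀ j, κ j ≤ M := by
      intro j
      rw [Finset.mem_piAntidiag] at hκ
      calc κ j ≤ ∑ j, κ j := Finset.single_le_sum (fun _ _ => Nat.zero_le _) (Finset.mem_univ j)
        _ ≤ M := hκ.1.le.trans hm
    calc _ = (Nat.multinomial Finset.univ κ : ℝ) *
          ∑ α : Fin d → ι, ∏ j, (w j (α j) * τ j (α j) ^ κ j) * y j ^ κ j := by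
          rw [Finset.mul_sum]
          refine Finset.sum_congr rfl fun α _ => ?_
          simp_rw [Finset.prod_mul_distrib, mul_pow, Finset.prod_mul_distrib]
          ring
      _ = (Nat.multinomial Finset.univ κ : ℝ) *
          ∏ j, ∑ a, (w j a * τ j a ^ κ j) * y j ^ κ j := by
          rw [Finset.prod_univ_sum, Fintype.piFinset_univ]
      _ = _ := by
          congr 1
          refine Finset.prod_congr rfl fun j _ => ?_
          rw [← Finset.sum_mul, h j _ (hκ' j), mul_pow]
  simp_rw [add_pow, Finset.mul_sum]
  rw [Finset.sum_comm]
  refine Finset.sum_congr rfl fun m hmr => ?_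
  rw [← hm (M - m) (Nat.sub_le _ _), Finset.mul_sum, Finset.sum_mul]
  refine Finset.sum_congr rfl fun α _ => ?_
  ring

/-! ### Measure of a strip -/

/-- The part of the unit ball where the affine form is at most `η` in absolute value has measure
`O(η)`: a shear that replaces one coordinate by `ω·x` maps it into a thin box. -/
lemma volume_strip_le {d : ℕ} (θ : Fin (d + 1) → ℝ) (hθ : 1 ≤ ∑ i : Fin d, θ i.succ ^ 2)
    {η : ℝ} (hη : 0 ≤ η) :
    ballMeasure d {x | |lin θ x| ≤ η} ≤ ENNReal.ofReal (d * 2 ^ d * η) := by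
  obtain ⟨i, hi⟩ : ∃ i : Fin d, (1 : ℝ) ≤ d * |θ i.succ| := by
    by_contra! hcon
    have hd : (0 : ℕ) < d := by
      rcases Nat.eq_zero_or_pos d with h | h
      · subst h; simp at hθ; linarith
      · exact h
    have hd1 : (1 : ℝ) ≤ d := by exact_mod_cast hd
    have h1 : ∀ i : Fin d, (d : ℝ) * θ i.succ ^ 2 < 1 := by
      intro i
      have h2 := hcon i
      have h3 : |θ i.succ| < 1 := by nlinarith [abs_nonneg (θ i.succ)]
      rw [← sq_abs]
      nlinarith [abs_nonneg (θ i.succ)]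
    have h4 : ∑ i : Fin d, (d : ℝ) * θ i.succ ^ 2 < ∑ i : Fin d, (1 : ℝ) :=
      Finset.sum_lt_sum_of_nonempty ⟨⟨0, hd⟩, Finset.mem_univ _⟩ fun i _ => h1 i
    rw [← Finset.mul_sum] at h4
    simp at h4
    nlinarith
  set ω : Fin d → ℝ := fun j => θ j.succ with hω
  have hωi : ω i ≠ 0 := by
    intro h0
    have : θ i.succ = 0 := h0
    rw [this] at hi; norm_num at hi
  let A : Matrix (Fin d) (Fin d) ℝ :=
    1 + Matrix.replicateCol Unit (Pi.single i (1 : ℝ)) *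
      Matrix.replicateRow Unit (ω - Pi.single i (1 : ℝ))
  have hdet : LinearMap.det (Matrix.toLin' A) = ω i := by
    rw [LinearMap.det_toLin', Matrix.det_one_add_replicateCol_mul_replicateRow]
    simp
  have hA : ∀ x, Matrix.toLin' A x = Function.update x i (∑ j, ω j * x j) := by
    intro x
    funext j
    have hent : ∀ k, A j k = (if j = k then 1 else 0) +
        (if j = i then 1 else 0) * (ω k - if k = i then 1 else 0) := by
      intro k
      simp [A, Matrix.mul_apply, Matrix.one_apply, Pi.single_apply]
    simp only [Matrix.toLin'_apply, Matrix.mulVec, dotProduct, hent]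
    by_cases hj : j = i
    · subst hj
      simp [add_mul, sub_mul, Finset.sum_add_distrib, Finset.sum_sub_distrib]
    · simp [hj]
  have hsub : {x | |lin θ x| ≤ η} ∩ {x : Fin d → ℝ | ∑ i, (x i) ^ 2 ≤ 1} ⊆
      Matrix.toLin' A ⁻¹' Set.Icc (Function.update (fun _ => -1) i (-θ 0 - η))
        (Function.update (fun _ => 1) i (-θ 0 + η)) := by
    rintro x ⟨hx1, hx2⟩
    have hx1' := abs_le.mp (show |lin θ x| ≤ η from hx1)
    unfold lin at hx1'
    rw [Set.mem_preimage, hA]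
    refine ⟨fun j => ?_, fun j => ?_⟩ <;> by_cases hj : j = i
    · subst hj; simp only [Function.update_self]; linarith
    · simp only [Function.update_of_ne hj]; exact (abs_le.mp (abs_coord_le hx2 j)).1
    · subst hj; simp only [Function.update_self]; linarith
    · simp only [Function.update_of_ne hj]; exact (abs_le.mp (abs_coord_le hx2 j)).2
  have hvol : volume (Set.Icc (Function.update (fun _ => -1) i (-θ 0 - η))
        (Function.update (fun _ => 1) i (-θ 0 + η)) : Set (Fin d → ℝ)) =
      ENNReal.ofReal (2 ^ d * η) := by
    rw [Real.volume_Icc_pi, ← ENNReal.ofReal_prod_of_nonneg]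
    · congr 1
      rw [← Finset.mul_prod_erase _ _ (Finset.mem_univ i)]
      have : ∀ j ∈ Finset.univ.erase i, (Function.update (fun _ => 1) i (-θ 0 + η) : Fin d → ℝ) j -
          (Function.update (fun _ => -1) i (-θ 0 - η) : Fin d → ℝ) j = 2 := by
        intro j hj
        rw [Function.update_of_ne (Finset.ne_of_mem_erase hj),
          Function.update_of_ne (Finset.ne_of_mem_erase hj)]
        norm_num
      rw [Finset.prod_congr rfl this, Finset.prod_const, Finset.card_erase_of_mem
        (Finset.mem_univ i), Finset.card_univ, Fintype.card_fin]
      simp only [Function.update_self]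
      obtain ⟨d', rfl⟩ : ∃ d', d = d' + 1 := ⟨d - 1, by have := i.2; omega⟩
      rw [pow_succ, Nat.add_sub_cancel]; ring
    · intro j _
      by_cases hj : j = i
      · subst hj; simp only [Function.update_self]; linarith
      · simp only [Function.update_of_ne hj]; norm_num
  rw [Measure.restrict_apply (isClosed_le (continuous_lin θ).abs continuous_const).measurableSet]
  refine (measure_mono hsub).trans ?_
  rw [Measure.addHaar_preimage_linearMap _ (by rw [hdet]; exact hωi), hdet, hvol,
    ← ENNReal.ofReal_mul (abs_nonneg _)]
  refine ENNReal.ofReal_le_ofReal ?_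
  rw [abs_inv, mul_assoc]
  have hpos : 0 < |ω i| := abs_pos.mpr hωi
  have : |ω i|⁻¹ ≤ d := by
    rw [inv_le_iff_one_le_mul₀ hpos]; exact hi
  gcongr

/-- If the parameters `θs α` are within `η` of `θ` and the weights `c α` reproduce the `M`-th power
of the affine form, then `∑ c α σ_M(θs α)` agrees with `σ_M(θ)` away from a strip of width `O(η)`
around the hyperplane where the sign changes, and differs by `O(ηᴹ)` on the strip.  The strip has
measure `O(η)`, which contributes the additional factor `η^{1/2}` in `L²`. -/
lemma eLpNorm_remainder_le {d M : ℕ} (hM : 1 ≤ M) {ι : Type*} [Fintype ι]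
    (θ : Fin (d + 1) → ℝ) (θs : ι → Fin (d + 1) → ℝ) (c : ι → ℝ) {Λ η : ℝ}
    (hη : 0 ≤ η) (hc : ∀ α, |c α| ≤ Λ) (hclose : ∀ α j, |θs α j - θ j| ≤ η)
    (hθ : 1 ≤ ∑ i : Fin d, θ i.succ ^ 2)
    (hid : ∀ x, ∑ α, c α * lin (θs α) x ^ M = lin θ x ^ M) :
    eLpNorm (neuron M θ - fun x => ∑ α, c α * neuron M (θs α) x) 2 (ballMeasure d) ≤
      ENNReal.ofReal (√(((1 + Fintype.card ι * Λ) * (2 * ((d + 1) * η)) ^ M) ^ 2 *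
        (d * 2 ^ d * ((d + 1) * η)))) := by
  set E := ((d : ℝ) + 1) * η with hE
  have hE0 : 0 ≤ E := by positivity
  set B := (1 + Fintype.card ι * Λ) * (2 * E) ^ M with hB
  have hΛ : 0 ≤ Fintype.card ι * Λ := by
    rcases isEmpty_or_nonempty ι with h | ⟨⟨α⟩⟩
    · simp
    · exact mul_nonneg (Nat.cast_nonneg _) ((abs_nonneg _).trans (hc α))
  have hB0 : 0 ≤ B := by positivity
  set strip : Set (Fin d → ℝ) := {x | |lin θ x| ≤ E} with hstrip
  have hms : MeasurableSet strip :=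
    (isClosed_le (continuous_lin θ).abs continuous_const).measurableSet
  have hpt : ∀ x, ∑ i, (x i) ^ 2 ≤ 1 →
      ‖(neuron M θ - fun x => ∑ α, c α * neuron M (θs α) x) x‖ ≤
        ‖strip.indicator (fun _ => B) x‖ := by
    intro x hx
    have hcl : ∀ α, |lin (θs α) x - lin θ x| ≤ E := fun α => abs_lin_sub_le hx (hclose α)
    simp only [Pi.sub_apply, Real.norm_eq_abs]
    by_cases hxs : x ∈ strip
    · rw [Set.indicator_of_mem hxs, abs_of_nonneg hB0]
      have hxs' : |lin θ x| ≤ E := hxs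
      have h1 : |neuron M θ x| ≤ (2 * E) ^ M := abs_relupow_le hM (by linarith)
      have h2 : ∀ α, |neuron M (θs α) x| ≤ (2 * E) ^ M := by
        intro α
        refine abs_relupow_le hM ?_
        have := abs_sub_abs_le_abs_sub (lin (θs α) x) (lin θ x)
        linarith [hcl α]
      calc _ ≤ |neuron M θ x| + ∑ α, |c α * neuron M (θs α) x| :=
            (abs_sub _ _).trans (by gcongr; exact Finset.abs_sum_le_sum_abs _ _)
        _ ≤ (2 * E) ^ M + ∑ α : ι, Λ * (2 * E) ^ M := by
            gcongr with α
            rw [abs_mul]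
            exact mul_le_mul (hc α) (h2 α) (abs_nonneg _) ((abs_nonneg _).trans (hc α))
        _ = B := by simp [hB]; ring
    · have hxs' : E < |lin θ x| := not_le.mp hxs
      rw [Set.indicator_of_notMem hxs]
      rcases lt_abs.mp hxs' with h | h
      · -- all affine forms are nonnegative at `x`
        have h1 : neuron M θ x = lin θ x ^ M := if_pos (by linarith)
        have h2 : ∀ α, neuron M (θs α) x = lin (θs α) x ^ M := fun α =>
          if_pos (by linarith [(abs_le.mp (hcl α)).1])
        simp_rw [h1, h2, hid x]
        simp
      · -- all affine forms are negative at `x`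
        have h1 : neuron M θ x = 0 := if_neg (by linarith)
        have h2 : ∀ α, neuron M (θs α) x = 0 := fun α =>
          if_neg (by linarith [(abs_le.mp (hcl α)).2])
        simp [h1, h2]
  calc _ ≤ eLpNorm (strip.indicator (fun _ => B)) 2 (ballMeasure d) :=
        eLpNorm_mono_ae (by filter_upwards [ae_ball d] with x hx using hpt x hx)
    _ = ENNReal.ofReal B * (ballMeasure d strip) ^ (1 / (2 : ℝ)) := by
        rw [eLpNorm_indicator_const hms (by norm_num) (by norm_num), Real.enorm_of_nonneg hB0]
        norm_num
    _ ≤ ENNReal.ofReal B * (ENNReal.ofReal (d * 2 ^ d * E)) ^ (1 / (2 : ℝ)) := by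
        gcongr
        exact volume_strip_le θ hθ hE0
    _ = _ := by
        rw [ENNReal.ofReal_rpow_of_nonneg (by positivity) (by norm_num),
          ← ENNReal.ofReal_mul hB0, ← Real.sqrt_eq_rpow,
          Real.sqrt_mul (sq_nonneg B), Real.sqrt_sq hB0]

/-- Indices of the grid of interpolation nodes.  By homogeneity, parameters may be moved to the
boundary of the cube `[-1,1]^{d+1}`; an index consists of a coordinate, a sign (together they
select a face), and a point of a `d`-dimensional grid on that face.  The grid has `Mq + 1` points
in `[-1,1]` in each direction and `M` additional ones to the right of it. -/
abbrev Grid (d M q : ℕ) : Type := Fin (d + 1) × Bool × (Fin d → Fin (M * q + M + 1))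

/-- The parameter vector of a grid index, with mesh size `2 / (Mq)`. -/
noncomputable def gridParam {d M q : ℕ} (g : Grid d M q) : Fin (d + 1) → ℝ :=
  g.1.insertNth (if g.2.1 then (1 : ℝ) else -1)
    (fun j => -1 + 2 / (M * q : ℝ) * ((g.2.2 j : ℕ) : ℝ))

lemma abs_gridParam_le {d M q : ℕ} (hM : 1 ≤ M) (hq : 1 ≤ q) (g : Grid d M q)
    (j : Fin (d + 1)) : |gridParam g j| ≤ 3 := by
  have hM' : (1 : ℝ) ≤ M := by exact_mod_cast hM
  have hq' : (1 : ℝ) ≤ q := by exact_mod_cast hq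
  unfold gridParam
  rcases Fin.eq_self_or_eq_succAbove g.1 j with h | ⟨j', h⟩
  · rw [h, Fin.insertNth_apply_same]
    split_ifs <;> norm_num
  · rw [h, Fin.insertNth_apply_succAbove]
    have h1 : ((g.2.2 j' : ℕ) : ℝ) ≤ M * q + M := by
      exact_mod_cast Nat.lt_succ_iff.mp (g.2.2 j').2
    have h2 : 2 / (M * q : ℝ) * ((g.2.2 j' : ℕ) : ℝ) ≤ 4 := by
      rw [div_mul_eq_mul_div, div_le_iff₀ (by positivity)]
      nlinarith
    have h3 : 0 ≤ 2 / (M * q : ℝ) * ((g.2.2 j' : ℕ) : ℝ) := by positivity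
    rw [abs_le]; constructor <;> linarith

lemma lin_insertNth {d : ℕ} (i : Fin (d + 1)) (s : ℝ) (t : Fin d → ℝ) (x : Fin d → ℝ) :
    lin (i.insertNth s t) x = s * (Fin.cons 1 x : Fin (d + 1) → ℝ) i +
      ∑ j, t j * (Fin.cons 1 x : Fin (d + 1) → ℝ) (i.succAbove j) := by
  rw [lin_eq_sum, Fin.sum_univ_succAbove _ i]
  simp

/-- Every dictionary element is within `O(q^{-(M+1/2)})` in `L²(𝔹ᵈ)` of the span of the
`O(qᵈ)` grid neurons. -/
lemma exists_grid_approx (d M : ℕ) (hM : 1 ≤ M) :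
    ∃ C : ℝ, 0 ≤ C ∧ ∀ q : ℕ, 1 ≤ q → ∀ h ∈ dictP d M, ∃ γ : Grid d M q → ℝ,
      eLpNorm (h - fun x => ∑ g, γ g * neuron M (gridParam g) x) 2 (ballMeasure d) ≤
        ENNReal.ofReal (√(C * (1 / (q : ℝ)) ^ (2 * M + 1))) := by
  obtain ⟨w, Λ, hΛ, hwb, hw⟩ := exists_lagrange_weights M
  refine ⟨(1 + (M + 1) ^ d * Λ ^ d) ^ 2 * (4 * (d + 1)) ^ (2 * M) * (d * 2 ^ d * (2 * (d + 1))),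
    by positivity, fun q hq h hh => ?_⟩
  obtain ⟨θ, hθ0, hθ1, rfl⟩ := exists_param_of_dict hh
  have hM' : (1 : ℝ) ≤ M := by exact_mod_cast hM
  have hq' : (1 : ℝ) ≤ q := by exact_mod_cast hq
  -- move `θ` to the face of the cube through its largest coordinate
  obtain ⟨i, hi⟩ := Finite.exists_max fun j => |θ j|
  set r := |θ i| with hr
  have hr0 : 0 < r := by
    rw [hr]
    by_contra! hcon
    have : ∀ j, θ j = 0 := fun j => abs_nonpos_iff.mp ((hi j).trans hcon)
    simp [this] at hθ1
  have hr1 : r ≤ 1 := by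
    rw [hr]
    refine Fin.cases hθ0 (fun j => ?_) i
    rw [← sq_le_one_iff_abs_le_one, ← hθ1]
    exact Finset.single_le_sum (f := fun j : Fin d => θ j.succ ^ 2) (fun _ _ => sq_nonneg _)
      (Finset.mem_univ j)
  set β : Bool := decide (0 < θ i) with hβ
  set s : ℝ := if β then 1 else -1 with hs
  have hθi : θ i = r * s := by
    rw [hs, hr, hβ]
    by_cases h0 : 0 < θ i
    · simp [h0, abs_of_pos h0]
    · simp [h0, abs_of_nonpos (not_lt.mp h0)]
  set t : Fin d → ℝ := fun j => θ (i.succAbove j) / r with ht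
  have htb : ∀ j, |t j| ≤ 1 := by
    intro j
    rw [ht, abs_div, abs_of_pos hr0, div_le_one hr0]
    exact hi _
  set θ' : Fin (d + 1) → ℝ := i.insertNth s t with hθ'
  have hθθ' : ∀ j, θ j = r * θ' j := by
    intro j
    rcases Fin.eq_self_or_eq_succAbove i j with h | ⟨j', h⟩
    · rw [h, hθ', Fin.insertNth_apply_same, hθi]
    · rw [h, hθ', Fin.insertNth_apply_succAbove, ht]; field_simp
  have hneu : ∀ x, neuron M θ x = r ^ M * neuron M θ' x := by
    intro x
    have : lin θ x = r * lin θ' x := by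
      simp only [lin_eq_sum, hθθ', Finset.mul_sum, mul_assoc]
    rw [neuron, this, relupow_mul hr0, neuron]
  have hθ'1 : 1 ≤ ∑ j : Fin d, θ' j.succ ^ 2 := by
    have h1 : r ^ 2 * ∑ j : Fin d, θ' j.succ ^ 2 = 1 := by
      rw [← hθ1, Finset.mul_sum]
      exact Finset.sum_congr rfl fun j _ => by rw [hθθ' j.succ]; ring
    have h2 : 0 ≤ ∑ j : Fin d, θ' j.succ ^ 2 := Finset.sum_nonneg fun _ _ => sq_nonneg _
    have h3 : r ^ 2 ≤ 1 := pow_le_one₀ hr0.le hr1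
    nlinarith
  -- the grid cell containing `t`, and the position `u` of `t` in units of the mesh size `δ`
  set δ : ℝ := 2 / (M * q : ℝ) with hδ
  have hδ0 : 0 < δ := by positivity
  set κ : Fin d → ℕ := fun j => ⌊(t j + 1) / δ⌋₊ with hκ
  set u : Fin d → ℝ := fun j => (t j + 1) / δ - κ j with hu
  have hpos : ∀ j, 0 ≤ (t j + 1) / δ := fun j =>
    div_nonneg (by linarith [(abs_le.mp (htb j)).1]) hδ0.le
  have hu0 : ∀ j, 0 ≤ u j := fun j => sub_nonneg.mpr (Nat.floor_le (hpos j))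
  have hu1 : ∀ j, u j ≤ 1 := fun j => by
    have := Nat.lt_floor_add_one ((t j + 1) / δ)
    simp only [hu, hκ]; linarith
  have hκM : ∀ j, κ j ≤ M * q := by
    intro j
    refine Nat.floor_le_of_le ?_
    push_cast
    rw [div_le_iff₀ hδ0, hδ, mul_div_cancel₀]
    · linarith [(abs_le.mp (htb j)).2]
    · positivity
  have htu : ∀ j, t j = (-1 + δ * κ j) + δ * u j := by
    intro j
    have : δ * ((t j + 1) / δ) = t j + 1 := mul_div_cancel₀ _ hδ0.ne'
    simp only [hu, mul_sub, this]; ring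
  let node : (Fin d → Fin (M + 1)) → Grid d M q := fun α =>
    (i, β, fun j => ⟨κ j + α j, by have := hκM j; have := (α j).2; omega⟩)
  let c : (Fin d → Fin (M + 1)) → ℝ := fun α => ∏ j, w (α j) (u j)
  have hnode : ∀ α, gridParam (node α) =
      i.insertNth s (fun j => (-1 + δ * κ j) + δ * ((α j : ℕ) : ℝ)) := by
    intro α
    unfold gridParam
    simp only [node]
    congr 1
    funext j
    push_cast
    ring
  have hid : ∀ x, ∑ α, c α * lin (gridParam (node α)) x ^ M = lin θ' x ^ M := by
    intro x
    simp_rw [hnode, hθ', lin_insertNth]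
    refine tensor_interpolation (fun j a => w a (u j))
      (fun j (a : Fin (M + 1)) => (-1 + δ * κ j) + δ * ((a : ℕ) : ℝ)) t (fun j e he => ?_) _ _
    have hdeg : ((Polynomial.C (-1 + δ * κ j) + Polynomial.C δ * Polynomial.X) ^ e :
        Polynomial ℝ).natDegree ≤ M := by
      refine Polynomial.natDegree_pow_le.trans ?_
      have : (Polynomial.C (-1 + δ * κ j) + Polynomial.C δ * Polynomial.X :
        Polynomial ℝ).natDegree ≤ 1 := by compute_degree
      nlinarith
    have := hw _ hdeg (u j)
    simp only [Polynomial.eval_pow, Polynomial.eval_add, Polynomial.eval_C, Polynomial.eval_mul,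
      Polynomial.eval_X] at this
    rw [this, ← htu j]
  have hcb : ∀ α, |c α| ≤ Λ ^ d := by
    intro α
    rw [Finset.abs_prod]
    calc _ ≤ ∏ j : Fin d, Λ := Finset.prod_le_prod (fun _ _ => abs_nonneg _)
          fun j _ => hwb _ _ (hu0 j) (hu1 j)
      _ = Λ ^ d := by simp
  have hclose : ∀ α j, |gridParam (node α) j - θ' j| ≤ 2 / q := by
    intro α j
    rw [hnode, hθ']
    rcases Fin.eq_self_or_eq_succAbove i j with h | ⟨j', h⟩
    · rw [h, Fin.insertNth_apply_same, Fin.insertNth_apply_same, sub_self, abs_zero]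
      positivity
    · rw [h, Fin.insertNth_apply_succAbove, Fin.insertNth_apply_succAbove, htu j']
      have h1 : (((α j' : ℕ)) : ℝ) ≤ M := by exact_mod_cast Nat.lt_succ_iff.mp (α j').2
      have h2 : |((α j' : ℕ) : ℝ) - u j'| ≤ M := by
        have := Nat.cast_nonneg (α := ℝ) (α j' : ℕ)
        rw [abs_le]; constructor <;> linarith [hu0 j', hu1 j']
      have h3 : δ * M = 2 / q := by rw [hδ]; field_simp
      rw [add_sub_add_left_eq_sub, ← mul_sub, abs_mul, abs_of_pos hδ0, ← h3]
      gcongr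
  have hrem := eLpNorm_remainder_le hM θ' (fun α => gridParam (node α)) c (by positivity) hcb
    hclose hθ'1 hid
  refine ⟨fun g => ∑ α, if node α = g then r ^ M * c α else 0, ?_⟩
  calc _ ≤ eLpNorm (neuron M θ' - fun x => ∑ α, c α * neuron M (gridParam (node α)) x) 2
          (ballMeasure d) := by
        refine eLpNorm_mono fun x => ?_
        have hx : (neuron M θ - fun x => ∑ g, (∑ α, if node α = g then r ^ M * c α else 0) *
            neuron M (gridParam g) x) x =
            r ^ M * (neuron M θ' - fun x => ∑ α, c α * neuron M (gridParam (node α)) x) x := by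
          simp only [Pi.sub_apply, hneu, mul_sub, Finset.sum_mul, Finset.mul_sum]
          rw [Finset.sum_comm]
          simp [ite_mul, mul_assoc]
        rw [hx, norm_mul, Real.norm_of_nonneg (by positivity)]
        exact mul_le_of_le_one_left (norm_nonneg _) (pow_le_one₀ hr0.le hr1)
    _ ≤ _ := hrem
    _ = _ := by
        congr 2
        simp only [Fintype.card_pi, Fintype.card_fin, Finset.prod_const, Finset.card_univ]
        push_cast
        rw [pow_succ, one_div, inv_pow]
        have : (2 * (((d : ℝ) + 1) * (2 / q))) = 4 * (d + 1) * (q : ℝ)⁻¹ := by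
          field_simp; norm_num
        rw [this]
        simp only [mul_pow, ← pow_mul, inv_pow]
        field_simp
        ring

/-! ### Rate for shallow networks -/

lemma maurey_eLpNorm {α : Type*} [MeasurableSpace α] {μ : Measure α} {ι : Type} [Fintype ι]
    (a : ι → ℝ) (v : ι → α → ℝ) (hv : ∀ j, MemLp (v j) 2 μ) {A T : ℝ} (hA : ∑ j, |a j| = A)
    (h0 : 0 < A) (hT0 : 0 ≤ T) (hT : ∀ j, eLpNorm (v j) 2 μ ≤ ENNReal.ofReal T) {N : ℕ}
    (hN : 0 < N) :
    ∃ (idx : Fin N → ι) (c : Fin N → ℝ),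
      eLpNorm (fun x => ∑ j, a j * v j x - ∑ i, c i * v (idx i) x) 2 μ ≤
        ENNReal.ofReal (A * (T / √N)) := by
  have hsum : ∀ {κ : Type} [Fintype κ] (b : κ → ℝ) (f : κ → ι),
      ⇑(∑ k, b k • (hv (f k)).toLp) =ᵐ[μ] fun x => ∑ k, b k * v (f k) x := by
    intro κ _ b f
    refine (Lp.coeFn_finsetSum _ _).trans ?_
    have h : ∀ᵐ x ∂μ, ∀ k, (b k • (hv (f k)).toLp : Lp ℝ 2 μ) x = b k * v (f k) x := by
      rw [ae_all_iff]
      intro k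
      filter_upwards [Lp.coeFn_smul (b k) (hv (f k)).toLp, (hv (f k)).coeFn_toLp] with x h1 h2
      rw [h1, Pi.smul_apply, h2, smul_eq_mul]
    filter_upwards [h] with x hx
    simp [hx]
  obtain ⟨idx, c, hc⟩ := maurey a (fun j => (hv j).toLp) A T hA h0 (fun j => by
    rw [Lp.norm_toLp]; exact ENNReal.toReal_le_of_le_ofReal hT0 (hT j)) N hN
  refine ⟨idx, c, ?_⟩
  have hae : ⇑((∑ j, a j • (hv j).toLp) - ∑ i, c i • (hv (idx i)).toLp) =ᵐ[μ]
      fun x => ∑ j, a j * v j x - ∑ i, c i * v (idx i) x := by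
    filter_upwards [Lp.coeFn_sub (∑ j, a j • (hv j).toLp) (∑ i, c i • (hv (idx i)).toLp),
      hsum a id, hsum c idx] with x h1 h2 h3
    rw [h1, Pi.sub_apply, h3]
    exact congrArg (· - _) h2
  rw [← eLpNorm_congr_ae hae, ← Lp.enorm_def, ← ofReal_norm]
  exact ENNReal.ofReal_le_ofReal hc

/-- Maurey's argument for the remainders of `exists_grid_approx`: they have norm `O(q^{-(M+1/2)})`, so
sampling `N` of them gains the factor `N^{-1/2}` on top. -/
lemma exists_shallow_approx (d M : ℕ) (hM : 1 ≤ M) :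
    ∃ C : ℝ, 0 ≤ C ∧ ∀ q N m : ℕ, 1 ≤ q → 0 < N →
      ∀ (a : Fin m → ℝ) (h : Fin m → (Fin d → ℝ) → ℝ) (R : ℝ), (∀ j, h j ∈ dictP d M) →
        ∑ j, |a j| ≤ R →
        ∃ (θ : Fin N ⊕ Grid d M q → Fin (d + 1) → ℝ) (c : Fin N ⊕ Grid d M q → ℝ),
          (∀ l j, |θ l j| ≤ 3) ∧
          eLpNorm ((fun x => ∑ j, a j * h j x) - fun x => ∑ l, c l * neuron M (θ l) x) 2
            (ballMeasure d) ≤ ENNReal.ofReal (R * √(C * (1 / (q : ℝ)) ^ (2 * M + 1) / N)) := by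
  obtain ⟨C, hC0, hC⟩ := exists_grid_approx d M hM
  refine ⟨C, hC0, fun q N m hq hN a h R hh ha => ?_⟩
  choose γ hγ using fun j => hC q hq (h j) (hh j)
  choose θ₀ hθ₀ hθ₁ hθ₂ using fun j => exists_param_of_dict (hh j)
  rcases (Finset.sum_nonneg fun j _ => abs_nonneg (a j) : 0 ≤ ∑ j, |a j|).eq_or_lt with h0 | h0
  · have ha0 : ∀ j, a j = 0 := by
      intro j
      have := (Finset.sum_eq_zero_iff_of_nonneg (fun j _ => abs_nonneg (a j))).mp h0.symm j
        (Finset.mem_univ j)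
      simpa using this
    refine ⟨fun _ _ => 0, fun _ => 0, by simp, ?_⟩
    simp only [ha0, zero_mul, Finset.sum_const_zero, sub_self]
    exact (eLpNorm_zero (ε := ℝ)).le.trans zero_le
  · set T := √(C * (1 / (q : ℝ)) ^ (2 * M + 1)) with hT
    set ρ : Fin m → (Fin d → ℝ) → ℝ :=
      fun j => h j - fun x => ∑ g, γ j g * neuron M (gridParam g) x with hρ
    have hmem : ∀ j, MemLp (ρ j) 2 (ballMeasure d) := by
      intro j
      refine ⟨Continuous.aestronglyMeasurable ?_, (hγ j).trans_lt ENNReal.ofReal_lt_top⟩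
      rw [hρ]
      simp only [hθ₂ j]
      exact (continuous_neuron hM _).sub
        (continuous_finsetSum _ fun g _ => (continuous_neuron hM _).const_mul _)
    obtain ⟨idx, c, hc⟩ := maurey_eLpNorm a ρ hmem rfl h0 (Real.sqrt_nonneg _) hγ hN
    refine ⟨Sum.elim (fun i => θ₀ (idx i)) gridParam,
      Sum.elim c (fun g => ∑ j, a j * γ j g - ∑ i, c i * γ (idx i) g), ?_, ?_⟩
    · rintro (i | g) j
      · refine le_trans ?_ (by norm_num : (1 : ℝ) ≤ 3)
        refine Fin.cases (hθ₀ _) (fun j' => ?_) j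
        rw [← sq_le_one_iff_abs_le_one, ← hθ₁ (idx i)]
        exact Finset.single_le_sum (f := fun j : Fin d => θ₀ (idx i) j.succ ^ 2)
          (fun _ _ => sq_nonneg _) (Finset.mem_univ j')
      · exact abs_gridParam_le hM hq g j
    · have hfun : ((fun x => ∑ j, a j * h j x) - fun x => ∑ l, Sum.elim c
          (fun g => ∑ j, a j * γ j g - ∑ i, c i * γ (idx i) g) l *
            neuron M (Sum.elim (fun i => θ₀ (idx i)) gridParam l) x) =
          fun x => ∑ j, a j * ρ j x - ∑ i, c i * ρ (idx i) x := by
        funext x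
        have h1 : ∀ i, neuron M (θ₀ (idx i)) x = h (idx i) x := fun i => by rw [← hθ₂]
        simp only [Pi.sub_apply, Fintype.sum_sum_type, Sum.elim_inl, Sum.elim_inr, h1, hρ,
          mul_sub, sub_mul, Finset.sum_sub_distrib, Finset.mul_sum, Finset.sum_mul]
        rw [Finset.sum_comm (s := (Finset.univ : Finset (Grid d M q))),
          Finset.sum_comm (s := (Finset.univ : Finset (Grid d M q)))]
        simp only [mul_assoc]
        ring
      rw [hfun]
      refine hc.trans (ENNReal.ofReal_le_ofReal ?_)
      rw [Real.sqrt_div' _ (Nat.cast_nonneg N)]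
      gcongr

/-! ### Raising the power of the activation function -/

/-- Mean value bounds for powers, free of calculus. -/
lemma pow_succ_sub_le {a b : ℝ} (ha : 0 ≤ a) (hab : a ≤ b) (m : ℕ) :
    (m + 1) * (b - a) * a ^ m ≤ b ^ (m + 1) - a ^ (m + 1) ∧
      b ^ (m + 1) - a ^ (m + 1) ≤ (m + 1) * (b - a) * b ^ m := by
  have hb : 0 ≤ b := ha.trans hab
  induction m with
  | zero => simp
  | succ m ih =>
    have h1 : b ^ (m + 1 + 1) - a ^ (m + 1 + 1) =
      b * (b ^ (m + 1) - a ^ (m + 1)) + (b - a) * a ^ (m + 1) := by ring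
    have h2 : a ^ (m + 1) ≤ b ^ (m + 1) := pow_le_pow_left₀ ha hab _
    have h3 : 0 ≤ b - a := sub_nonneg.mpr hab
    rw [h1]
    push_cast
    constructor
    · have h4 := mul_le_mul_of_nonneg_left ih.1 ha
      have h5 : 0 ≤ b ^ (m + 1) - a ^ (m + 1) := by linarith
      have h6 := mul_le_mul_of_nonneg_right hab h5
      have h7 : a * ((m + 1) * (b - a) * a ^ m) = (m + 1) * (b - a) * a ^ (m + 1) := by ring
      nlinarith
    · have h4 := mul_le_mul_of_nonneg_left ih.2 hb
      have h5 := mul_le_mul_of_nonneg_left h2 h3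
      have h7 : b * ((m + 1) * (b - a) * b ^ m) = (m + 1) * (b - a) * b ^ (m + 1) := by ring
      nlinarith

/-- Since `σ_{m+1}' = (m+1) σ_m`, difference quotients of `σ_{m+1}` approximate `σ_m`, uniformly on
bounded intervals. -/
lemma exists_difference_quotient {m : ℕ} (hm : 1 ≤ m) {T ε η : ℝ} (hT : 0 ≤ T) (hε : 0 < ε)
    (hη : 0 < η) :
    ∃ h : ℝ, 0 < h ∧ h ≤ η ∧ ∀ t, |t| ≤ T →
      |relupow m t - (1 / ((m + 1) * h) * relupow (m + 1) (t + h) -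
        1 / ((m + 1) * h) * relupow (m + 1) t)| ≤ ε := by
  obtain ⟨m, rfl⟩ : ∃ m', m = m' + 1 := ⟨m - 1, by omega⟩
  set B : ℝ := (m + 1) * (T + 1) ^ m with hB
  have hB0 : 0 < B := by positivity
  set h : ℝ := min η (min 1 (ε / B)) with hh
  have h0 : 0 < h := lt_min hη (lt_min one_pos (by positivity))
  have h1 : h ≤ 1 := (min_le_right _ _).trans (min_le_left _ _)
  have h2 : h * B ≤ ε := by
    rw [← le_div_iff₀ hB0]; exact (min_le_right _ _).trans (min_le_right _ _)
  refine ⟨h, h0, min_le_left _ _, fun t ht => ?_⟩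
  have ht' := abs_le.mp ht
  set a := max t 0 with ha
  set b := max (t + h) 0 with hb
  have ha0 : 0 ≤ a := le_max_right _ _
  have hab : a ≤ b := max_le_max (by linarith) le_rfl
  have hbh : b - a ≤ h := by
    rw [sub_le_iff_le_add]
    exact max_le (by linarith [le_max_left t 0]) (by linarith)
  have hbT : b ≤ T + 1 := max_le (by linarith) (by linarith)
  rw [relupow_eq_max (by omega), relupow_eq_max (by omega), relupow_eq_max (by omega),
    ← ha, ← hb, ← mul_sub]
  have hd0 : 0 ≤ b - a := sub_nonneg.mpr hab
  obtain ⟨p1, p2⟩ := pow_succ_sub_le ha0 hab (m + 1)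
  obtain ⟨-, p3⟩ := pow_succ_sub_le ha0 hab m
  have hc : (0 : ℝ) < (((m + 1 : ℕ) : ℝ) + 1) * h := by positivity
  -- the difference quotient lies between `a ^ (m+1)` and `b ^ (m+1)`
  have hlow : a ^ (m + 1) ≤ 1 / ((((m + 1 : ℕ) : ℝ) + 1) * h) *
      (b ^ (m + 1 + 1) - a ^ (m + 1 + 1)) := by
    rw [one_div_mul_eq_div, le_div_iff₀ hc]
    refine le_trans (le_of_eq ?_) p1
    rcases le_total 0 t with h3 | h3
    · have : b - a = h := by
        rw [hb, ha, max_eq_left h3, max_eq_left (by linarith)]; ring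
      rw [this]; ring
    · have : a = 0 := max_eq_right h3
      rw [this, zero_pow (by omega)]; ring
  have hup : 1 / ((((m + 1 : ℕ) : ℝ) + 1) * h) *
      (b ^ (m + 1 + 1) - a ^ (m + 1 + 1)) ≤ b ^ (m + 1) := by
    rw [one_div_mul_eq_div, div_le_iff₀ hc]
    refine p2.trans ?_
    rw [mul_comm (b ^ (m + 1))]
    gcongr
  have hdiff : b ^ (m + 1) - a ^ (m + 1) ≤ ε := by
    refine p3.trans (le_trans ?_ h2)
    rw [hB]
    calc ((m : ℝ) + 1) * (b - a) * b ^ m ≤ (m + 1) * h * (T + 1) ^ m := by gcongr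
      _ = _ := by ring
  rw [abs_le]
  constructor <;> linarith

/-- Iterated difference quotients: `σ_m` is a uniform limit on bounded intervals of linear
combinations of `2^D` translates of `σ_{m+D}`. -/
lemma exists_lift_power {m : ℕ} (hm : 1 ≤ m) (D : ℕ) :
    ∀ (T ε η : ℝ), 0 ≤ T → 0 < ε → 0 < η →
    ∃ (ι : Type) (_ : Fintype ι) (c s : ι → ℝ), Fintype.card ι = 2 ^ D ∧ (∀ i, |s i| ≤ η) ∧
      ∀ t, |t| ≤ T → |relupow m t - ∑ i, c i * relupow (m + D) (t + s i)| ≤ ε := by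
  induction D with
  | zero =>
    intro T ε η _ hε hη
    exact ⟨Unit, inferInstance, fun _ => 1, fun _ => 0, by simp, by simpa using hη.le,
      by simpa using fun _ _ => hε.le⟩
  | succ D ih =>
    intro T ε η hT hε hη
    obtain ⟨ι, _, c, s, hcard, hs, hc⟩ := ih T (ε / 2) (η / 2) hT (by linarith) (by linarith)
    set A := ∑ i, |c i| with hA
    have hA0 : 0 ≤ A := Finset.sum_nonneg fun _ _ => abs_nonneg _
    obtain ⟨h, h0, h1, h2⟩ := exists_difference_quotient (m := m + D) (by omega)
      (T := T + η / 2) (ε := ε / 2 / (A + 1)) (η := η / 2) (by linarith) (by positivity)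
      (by linarith)
    set r : ℝ := 1 / (((m + D : ℕ) + 1) * h) with hr
    refine ⟨ι × Bool, inferInstance, fun p => c p.1 * (if p.2 then r else -r),
      fun p => s p.1 + (if p.2 then h else 0), ?_, ?_, fun t ht => ?_⟩
    · simp [hcard, pow_succ]
    · rintro ⟨i, b⟩
      have hsi := abs_le.mp (hs i)
      cases b <;> simp only [abs_le] <;> constructor <;> simp <;> linarith
    · have hexp : ∑ p : ι × Bool, (c p.1 * (if p.2 then r else -r)) *
          relupow (m + (D + 1)) (t + (s p.1 + (if p.2 then h else 0))) =
          ∑ i, c i * (r * relupow (m + D + 1) (t + s i + h) - r * relupow (m + D + 1) (t + s i)) := by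
        rw [Fintype.sum_prod_type]
        refine Finset.sum_congr rfl fun i _ => ?_
        simp only [Fintype.sum_bool, if_true, Bool.false_eq_true, if_false, add_zero, ← add_assoc]
        ring
      rw [hexp]
      have hsplit : relupow m t - ∑ i, c i * (r * relupow (m + D + 1) (t + s i + h) -
          r * relupow (m + D + 1) (t + s i)) =
          (relupow m t - ∑ i, c i * relupow (m + D) (t + s i)) +
          ∑ i, c i * (relupow (m + D) (t + s i) - (r * relupow (m + D + 1) (t + s i + h) -
            r * relupow (m + D + 1) (t + s i))) := by
        simp only [mul_sub, Finset.sum_sub_distrib]; ring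
      rw [hsplit]
      refine (abs_add_le _ _).trans ?_
      have hb : |∑ i, c i * (relupow (m + D) (t + s i) - (r * relupow (m + D + 1) (t + s i + h) -
            r * relupow (m + D + 1) (t + s i)))| ≤ A * (ε / 2 / (A + 1)) := by
        refine (Finset.abs_sum_le_sum_abs _ _).trans ?_
        rw [hA, Finset.sum_mul]
        refine Finset.sum_le_sum fun i _ => ?_
        rw [abs_mul]
        refine mul_le_mul_of_nonneg_left (h2 _ ?_) (abs_nonneg _)
        exact (abs_add_le _ _).trans (add_le_add ht (hs i))
      have hb2 : A * (ε / 2 / (A + 1)) ≤ ε / 2 := by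
        rw [mul_div_assoc', div_le_iff₀ (by positivity)]
        nlinarith
      linarith [hc t ht]

/-! ### Networks of depth `L` -/

/-- With diagonal inner layers a depth `L` network applies `σ_k` to each coordinate `L` times, so it
realises combinations of ridge functions with activation `σ_{k^L}`. -/
lemma mem_deepClass {k d W L : ℕ} (hk : 1 ≤ k) (hL : 0 < L) {B : ℝ} (hB : 1 ≤ B) {ι : Type*}
    [Fintype ι] (hι : Fintype.card ι ≤ W) (θ : ι → Fin (d + 1) → ℝ) (c : ι → ℝ)
    (hθ : ∀ l j, |θ l j| ≤ B) :
    (fun x => ∑ l, c l * neuron (k ^ L) (θ l) x) ∈ DeepReLUkClass k d W L B := by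
  have hB0 : 0 ≤ B := zero_le_one.trans hB
  obtain ⟨e⟩ : Nonempty (ι ↪ Fin W) := Function.Embedding.nonempty_of_card_le (by simpa using hι)
  set Θ : Fin W → Fin (d + 1) → ℝ := Function.extend e θ 0 with hΘ
  have hΘb : ∀ j i, |Θ j i| ≤ B := by
    intro j i
    by_cases hj : ∃ l, e l = j
    · obtain ⟨l, rfl⟩ := hj
      rw [hΘ, e.injective.extend_apply]; exact hθ l i
    · rw [hΘ, Function.extend_apply' _ _ _ hj]; simpa using hB0
  refine ⟨fun j i => Θ j i.succ, fun j => Θ j 0, fun _ => 1, fun _ _ => 0, Function.extend e c 0,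
    fun j i => hΘb j i.succ, fun j => hΘb j 0, fun m _ => ⟨fun i j => ?_, fun i => by simpa⟩, ?_⟩
  · change |(1 : Matrix (Fin W) (Fin W) ℝ) i j| ≤ B
    rw [Matrix.one_apply]; split_ifs <;> simp [hB, hB0]
  · have hlay : ∀ m x j, deepLayers k d W (fun j i => Θ j i.succ) (fun j => Θ j 0) (fun _ => 1)
        (fun _ _ => 0) m x j = neuron (k ^ (m + 1)) (Θ j) x := by
      intro m x
      induction m with
      | zero => intro j; simp [deepLayers, neuron, lin, add_comm]
      | succ m ih =>
        intro j
        simp only [deepLayers, ih, Matrix.one_apply, ite_mul, one_mul, zero_mul,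
          Finset.sum_ite_eq, Finset.mem_univ, if_true, add_zero]
        rw [neuron, relupow_comp hk (Nat.one_le_pow _ _ hk), ← pow_succ, neuron]
    funext x
    refine Fintype.sum_of_injective e e.injective _ _ (fun j hj => ?_) fun l => ?_
    · rw [Function.extend_apply' _ _ _ (by simpa using hj)]; simp
    · rw [hlay, Nat.sub_add_cancel hL, e.injective.extend_apply, hΘ, e.injective.extend_apply]


lemma exists_volume_constant (d : ℕ) :
    ∃ V : ℝ, 0 ≤ V ∧ ∀ (u : (Fin d → ℝ) → ℝ) (c : ℝ),
      (∀ x, ∑ i, (x i) ^ 2 ≤ 1 → |u x| ≤ c) →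
        eLpNorm u 2 (ballMeasure d) ≤ ENNReal.ofReal (V * c) := by
  refine ⟨((ballMeasure d Set.univ) ^ (1 / (2 : ℝ))).toReal, ENNReal.toReal_nonneg,
    fun u c h => (eLpNorm_sub_le_of_uniform h).trans_eq ?_⟩
  rw [ENNReal.ofReal_mul ENNReal.toReal_nonneg, ENNReal.ofReal_toReal]
  exact ENNReal.rpow_ne_top_of_nonneg (by norm_num) (measure_ne_top _ _)

/-- Lifting the activation of a shallow network: a combination of `m` neurons of power `M` is
approximated arbitrarily well by a depth `L` network of width `m 2^D`, where `M + D = k^L`. -/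
lemma exists_deep_of_shallow {k d M D L W : ℕ} (hk : 2 ≤ k) (hL : 0 < L) (hM : 1 ≤ M)
    (hD : M + D = k ^ L) {ι : Type} [Fintype ι] (hι : Fintype.card ι * 2 ^ D ≤ W)
    (θ : ι → Fin (d + 1) → ℝ) (c : ι → ℝ) (hθ : ∀ l j, |θ l j| ≤ 3) {ε : ℝ} (hε : 0 < ε) :
    ∃ g ∈ DeepReLUkClass k d W L (((k : ℝ) / 2 + 1) ^ 4), Measurable g ∧
      eLpNorm ((fun x => ∑ l, c l * neuron M (θ l) x) - g) 2 (ballMeasure d) ≤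
        ENNReal.ofReal ε := by
  obtain ⟨V, hV0, hV⟩ := exists_volume_constant d
  have hk' : (2 : ℝ) ≤ k := by exact_mod_cast hk
  have hB : (4 : ℝ) ≤ ((k : ℝ) / 2 + 1) ^ 4 := by
    calc (4 : ℝ) ≤ 2 ^ 4 := by norm_num
      _ ≤ _ := by gcongr; linarith
  set A := ∑ l, |c l| with hA
  have hA0 : 0 ≤ A := Finset.sum_nonneg fun _ _ => abs_nonneg _
  obtain ⟨κ, _, c', s, hcard, hs, hc'⟩ := exists_lift_power hM D ((d + 1) * 3)
    (ε / ((V + 1) * (A + 1))) 1 (by positivity) (by positivity) one_pos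
  set θ' : ι × κ → Fin (d + 1) → ℝ := fun p j => θ p.1 j + if j = 0 then s p.2 else 0 with hθ'
  have hlin : ∀ p x, lin (θ' p) x = lin (θ p.1) x + s p.2 := by
    intro p x
    simp [lin, hθ', Fin.succ_ne_zero]
    ring
  have hθb : ∀ p j, |θ' p j| ≤ ((k : ℝ) / 2 + 1) ^ 4 := by
    intro p j
    refine le_trans ?_ hB
    refine (abs_add_le _ _).trans ?_
    have h1 : |if j = 0 then s p.2 else 0| ≤ 1 := by
      split_ifs
      · exact hs _
      · simp
    linarith [hθ p.1 j]
  refine ⟨_, mem_deepClass (by omega) hL (by linarith) (ι := ι × κ)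
    (by rwa [Fintype.card_prod, hcard]) θ' (fun p => c p.1 * c' p.2) hθb, ?_, ?_⟩
  · exact (continuous_finsetSum _ fun p _ => (continuous_neuron
      (Nat.one_le_pow _ _ (by omega)) _).const_mul _).measurable
  · refine (hV _ (A * (ε / ((V + 1) * (A + 1)))) fun x hx => ?_).trans
      (ENNReal.ofReal_le_ofReal ?_)
    · rw [Pi.sub_apply, Fintype.sum_prod_type, ← Finset.sum_sub_distrib, hA, Finset.sum_mul]
      refine (Finset.abs_sum_le_sum_abs _ _).trans (Finset.sum_le_sum fun l _ => ?_)
      have h1 : c l * neuron M (θ l) x - ∑ i, c l * c' i * neuron (k ^ L) (θ' (l, i)) x =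
          c l * (relupow M (lin (θ l) x) - ∑ i, c' i * relupow (M + D) (lin (θ l) x + s i)) := by
        rw [mul_sub, Finset.mul_sum, hD]
        simp only [neuron, hlin, mul_assoc]
      rw [h1, abs_mul]
      exact mul_le_mul_of_nonneg_left (hc' _ (abs_lin_le hx (hθ l))) (abs_nonneg _)
    · have h1 : V * (A * (ε / ((V + 1) * (A + 1)))) = ε * ((V * A) / ((V + 1) * (A + 1))) := by
        ring
      rw [h1]
      refine mul_le_of_le_one_right hε.le ?_
      rw [div_le_one (by positivity)]
      nlinarith

/-! ### The rate -/

/-- The choice of grid resolution `q ~ n^{1/d}` and of the number `N ~ n` of sampled neurons. -/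
lemma exists_resolution {d K M : ℕ} (hd : 0 < d) (hKM : K ≤ M) {A Q n : ℕ} (hA : 1 ≤ A)
    (hQ : 1 ≤ Q) (hAn : A ≤ n) (hQn : Q ≤ n) :
    ∃ q N : ℕ, 1 ≤ q ∧ 0 < N ∧ A * q ^ d ≤ n ∧ Q * N ≤ n ∧
      (1 / (q : ℝ)) ^ (2 * M + 1) / N ≤ 2 * Q * (2 * A) ^ (2 * K + 1) *
        ((n : ℝ) ^ (-(1 / 2 : ℝ) - (2 * (K : ℝ) + 1) / (2 * (d : ℝ)))) ^ 2 := by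
  have hd' : (0 : ℝ) < d := by exact_mod_cast hd
  have hA' : (1 : ℝ) ≤ A := by exact_mod_cast hA
  have hQ' : (1 : ℝ) ≤ Q := by exact_mod_cast hQ
  have hn : (1 : ℝ) ≤ n := by exact_mod_cast hA.trans hAn
  have hn0 : (0 : ℝ) < n := by linarith
  set y : ℝ := ((n : ℝ) / A) ^ (1 / (d : ℝ)) with hy
  have hnA : 1 ≤ (n : ℝ) / A := by
    rw [le_div_iff₀ (by linarith), one_mul]; exact_mod_cast hAn
  have hy1 : 1 ≤ y := Real.one_le_rpow hnA (by positivity)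
  have hyd : y ^ d = n / A := by
    rw [hy, ← Real.rpow_natCast, ← Real.rpow_mul (by positivity), one_div_mul_cancel hd'.ne',
      Real.rpow_one]
  set q := ⌊y⌋₊ with hq
  have hq1 : 1 ≤ q := Nat.le_floor (by simpa using hy1)
  have hq1' : (1 : ℝ) ≤ q := by exact_mod_cast hq1
  have hqy : (q : ℝ) ≤ y := Nat.floor_le (by linarith)
  have hyq : y < q + 1 := Nat.lt_floor_add_one y
  set N := n / Q with hN
  have hN1 : 0 < N := Nat.div_pos hQn (by omega)
  have hN1' : (1 : ℝ) ≤ N := by exact_mod_cast hN1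
  refine ⟨q, N, hq1, hN1, ?_, Nat.mul_div_le n Q, ?_⟩
  · have : (A : ℝ) * q ^ d ≤ n := by
      calc (A : ℝ) * q ^ d ≤ A * y ^ d := by gcongr
        _ = n := by rw [hyd]; field_simp
    exact_mod_cast this
  · have hnN : (n : ℝ) ≤ 2 * Q * N := by
      have h1 : n < Q * (N + 1) := by
        rw [hN]; exact Nat.lt_mul_div_succ n (by omega)
      have h2 : (n : ℝ) ≤ Q * (N + 1) := by exact_mod_cast h1.le
      nlinarith
    have hinvN : 1 / (N : ℝ) ≤ 2 * Q * (n : ℝ)⁻¹ := by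
      rw [← div_eq_mul_inv, div_le_div_iff₀ (by linarith) hn0]; linarith
    set z : ℝ := (n : ℝ) ^ (-(1 / (d : ℝ))) with hz
    have hz0 : 0 < z := Real.rpow_pos_of_pos hn0 _
    have hyz : 1 / y ≤ A * z := by
      have hroot : (A : ℝ) ^ (1 / (d : ℝ)) ≤ A := by
        refine (Real.rpow_le_rpow_of_exponent_le hA' ?_).trans_eq (Real.rpow_one _)
        rw [div_le_one hd']; exact_mod_cast hd
      rw [hy, Real.div_rpow hn0.le (by linarith), one_div_div, div_eq_mul_inv, ← Real.rpow_neg hn0.le]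
      gcongr
    have hinvq : 1 / (q : ℝ) ≤ 2 * A * z := by
      have h1 : 1 / (q : ℝ) ≤ 2 * (1 / y) := by
        rw [mul_one_div, div_le_div_iff₀ (by linarith) (by linarith)]; linarith
      calc _ ≤ 2 * (1 / y) := h1
        _ ≤ 2 * (A * z) := by gcongr
        _ = _ := by ring
    have hrate : ((n : ℝ) ^ (-(1 / 2 : ℝ) - (2 * (K : ℝ) + 1) / (2 * (d : ℝ)))) ^ 2 =
        (n : ℝ)⁻¹ * z ^ (2 * K + 1) := by
      rw [hz, ← Real.rpow_natCast, ← Real.rpow_natCast, ← Real.rpow_mul hn0.le,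
        ← Real.rpow_mul hn0.le, ← Real.rpow_neg_one, ← Real.rpow_add hn0]
      congr 1
      push_cast
      field_simp
      ring
    calc (1 / (q : ℝ)) ^ (2 * M + 1) / N = (1 / (q : ℝ)) ^ (2 * M + 1) * (1 / N) := by ring
      _ ≤ (1 / (q : ℝ)) ^ (2 * K + 1) * (1 / N) := by
          refine mul_le_mul_of_nonneg_right ?_ (by positivity)
          refine pow_le_pow_of_le_one (by positivity) ?_ (by omega)
          rw [div_le_one (by linarith)]; exact hq1'
      _ ≤ (2 * A * z) ^ (2 * K + 1) * (2 * Q * (n : ℝ)⁻¹) := by gcongr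
      _ = _ := by rw [hrate, mul_pow]; ring

/-- The asserted rate for finite combinations of dictionary elements, up to an arbitrary `ε`. -/
lemma exists_rate {k d K M L : ℕ} (hd : 0 < d) (hk : 2 ≤ k) (hL : 0 < L) (hM : 1 ≤ M)
    (hKM : K ≤ M) (hML : M ≤ k ^ L) :
    ∃ C : ℝ, 0 < C ∧ ∀ n : ℕ, 0 < n → ∀ (m : ℕ) (a : Fin m → ℝ) (h : Fin m → (Fin d → ℝ) → ℝ)
      (R : ℝ), (∀ j, h j ∈ dictP d M) → ∑ j, |a j| ≤ R → ∀ ε : ℝ, 0 < ε →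
      ∃ g ∈ DeepReLUkClass k d (2 * (k + 1) * n) L (((k : ℝ) / 2 + 1) ^ 4), Measurable g ∧
        eLpNorm ((fun x => ∑ j, a j * h j x) - g) 2 (ballMeasure d) ≤
          ENNReal.ofReal (C * R * (n : ℝ) ^ (-(1 / 2 : ℝ) - (2 * (K : ℝ) + 1) / (2 * (d : ℝ)))) +
            ENNReal.ofReal ε := by
  obtain ⟨D, hD⟩ : ∃ D, M + D = k ^ L := ⟨_, Nat.add_sub_cancel' hML⟩
  obtain ⟨C₀, hC₀, hshallow⟩ := exists_shallow_approx d M hM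
  obtain ⟨V, hV0, hV⟩ := exists_volume_constant d
  set Q : ℕ := 2 ^ D with hQ
  have hQ1 : 1 ≤ Q := Nat.one_le_two_pow
  -- `A q^d` bounds the width needed to realise the grid neurons of resolution `q`
  set A : ℕ := Q * (2 * (d + 1) * (3 * M) ^ d) with hA
  have hA1 : 1 ≤ A := Nat.mul_pos hQ1 (by positivity)
  have hQA : Q ≤ A := Nat.le_mul_of_pos_right _ (by positivity)
  have hA1' : (1 : ℝ) ≤ A := by exact_mod_cast hA1
  set e : ℝ := -(1 / 2 : ℝ) - (2 * (K : ℝ) + 1) / (2 * (d : ℝ)) with he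
  have he0 : e ≤ 0 := by
    have : 0 ≤ (2 * (K : ℝ) + 1) / (2 * (d : ℝ)) := by positivity
    linarith
  set C₁ : ℝ := √(C₀ * (2 * Q * (2 * A) ^ (2 * K + 1))) with hC₁
  set C₂ : ℝ := V * ((d + 1 : ℝ) ^ M) * (A : ℝ) ^ (-e) with hC₂
  have hC₁0 : 0 ≤ C₁ := Real.sqrt_nonneg _
  have hC₂0 : 0 ≤ C₂ := by positivity
  have hk' : (2 : ℝ) ≤ k := by exact_mod_cast hk
  refine ⟨C₁ + C₂ + 1, by positivity, fun n hn m a h R hh ha ε hε => ?_⟩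
  have hR : 0 ≤ R := (Finset.sum_nonneg fun _ _ => abs_nonneg _).trans ha
  have hn0 : (0 : ℝ) < n := by exact_mod_cast hn
  have hne : 0 < (n : ℝ) ^ e := Real.rpow_pos_of_pos hn0 _
  rcases lt_or_ge n A with hnA | hnA
  · -- for the finitely many small `n` the zero network suffices
    refine ⟨fun _ => 0, ?_, measurable_const, ?_⟩
    · have := mem_deepClass (k := k) (d := d) (W := 2 * (k + 1) * n) (L := L) (by omega) hL
        (B := ((k : ℝ) / 2 + 1) ^ 4) (one_le_pow₀ (by linarith)) (ι := Fin 0) (by simp)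
        (fun _ _ => 0) (fun _ => 0) (by simp)
      simpa using this
    · refine le_trans ?_ le_self_add
      refine (hV _ (R * (d + 1) ^ M) fun x hx => ?_).trans (ENNReal.ofReal_le_ofReal ?_)
      · rw [Pi.sub_apply, sub_zero]
        refine (Finset.abs_sum_le_sum_abs _ _).trans ?_
        calc ∑ j, |a j * h j x| ≤ ∑ j, |a j| * (d + 1) ^ M := by
              refine Finset.sum_le_sum fun j _ => ?_
              obtain ⟨θ, h0, h1, h2⟩ := exists_param_of_dict (hh j)
              rw [abs_mul, h2, neuron]
              refine mul_le_mul_of_nonneg_left (abs_relupow_le hM ?_) (abs_nonneg _)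
              refine (abs_lin_le hx (T := 1) fun j => ?_).trans_eq (mul_one _)
              refine Fin.cases h0 (fun j' => ?_) j
              rw [← sq_le_one_iff_abs_le_one, ← h1]
              exact Finset.single_le_sum (f := fun j : Fin d => θ j.succ ^ 2)
                (fun _ _ => sq_nonneg _) (Finset.mem_univ j')
          _ ≤ _ := by rw [← Finset.sum_mul]; gcongr
      · have h1 : 1 ≤ (A : ℝ) ^ (-e) * (n : ℝ) ^ e := by
          have h2 : (A : ℝ) ^ e ≤ (n : ℝ) ^ e :=
            Real.rpow_le_rpow_of_nonpos hn0 (by exact_mod_cast hnA.le) he0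
          calc (1 : ℝ) = (A : ℝ) ^ (-e) * (A : ℝ) ^ e := by
                rw [← Real.rpow_add (by linarith)]; simp
            _ ≤ _ := by gcongr
        calc V * (R * (d + 1) ^ M) ≤ V * (R * (d + 1) ^ M) * ((A : ℝ) ^ (-e) * (n : ℝ) ^ e) :=
              le_mul_of_one_le_right (by positivity) h1
          _ = C₂ * R * (n : ℝ) ^ e := by rw [hC₂]; ring
          _ ≤ _ := by gcongr; linarith
  · obtain ⟨q, N, hq, hN, hAq, hQN, hrate⟩ := exists_resolution hd hKM hA1 hQ1 hnA (hQA.trans hnA)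
    obtain ⟨θ, c, hθ, herr⟩ := hshallow q N m hq hN a h R hh ha
    have hcard : Fintype.card (Fin N ⊕ Grid d M q) * 2 ^ D ≤ 2 * (k + 1) * n := by
      have h1 : Fintype.card (Grid d M q) = (d + 1) * (2 * (M * q + M + 1) ^ d) := by
        simp [Grid]
      have h2 : M * q + M + 1 ≤ 3 * M * q := by nlinarith
      have h3 : (M * q + M + 1) ^ d ≤ (3 * M) ^ d * q ^ d := by
        rw [← mul_pow]; exact Nat.pow_le_pow_left h2 d
      calc Fintype.card (Fin N ⊕ Grid d M q) * 2 ^ D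
          = Q * N + Q * (2 * (d + 1)) * (M * q + M + 1) ^ d := by
            rw [Fintype.card_sum, Fintype.card_fin, h1, hQ]; ring
        _ ≤ Q * N + Q * (2 * (d + 1)) * ((3 * M) ^ d * q ^ d) := by gcongr
        _ = Q * N + A * q ^ d := by rw [hA]; ring
        _ ≤ n + n := add_le_add hQN hAq
        _ ≤ _ := by nlinarith
    obtain ⟨g, hg, hgm, hge⟩ := exists_deep_of_shallow hk hL hM hD hcard θ c hθ hε
    refine ⟨g, hg, hgm, ?_⟩
    have hsplit : (fun x => ∑ j, a j * h j x) - g =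
        ((fun x => ∑ j, a j * h j x) - fun x => ∑ l, c l * neuron M (θ l) x) +
          ((fun x => ∑ l, c l * neuron M (θ l) x) - g) := by abel
    rw [hsplit]
    refine (eLpNorm_add_le_of_right ?_).trans (add_le_add (herr.trans ?_) hge)
    · exact (continuous_finsetSum _ fun l _ =>
        (continuous_neuron hM _).const_mul _).measurable.sub hgm
    · refine ENNReal.ofReal_le_ofReal ?_
      have h1 : √(C₀ * (1 / (q : ℝ)) ^ (2 * M + 1) / N) ≤ C₁ * (n : ℝ) ^ e := by
        rw [hC₁, ← Real.sqrt_sq hne.le, ← Real.sqrt_mul (by positivity)]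
        refine Real.sqrt_le_sqrt ?_
        rw [mul_div_assoc, mul_assoc]
        refine mul_le_mul_of_nonneg_left ?_ hC₀
        exact hrate
      calc R * √(C₀ * (1 / (q : ℝ)) ^ (2 * M + 1) / N) ≤ R * (C₁ * (n : ℝ) ^ e) := by gcongr
        _ = C₁ * R * (n : ℝ) ^ e := by ring
        _ ≤ _ := by gcongr; linarith

end AdaptiveReLU

/-- for `k ≥ 2` and arbitrary `K ∈ ℕ⁺`, set `ℓ = ⌈log_k K⌉` and take depth
`L ≥ ℓ`.  Then `k^ℓ ≥ K`, and there is a constant `C > 0` independent of `n` such that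
for every `n`, every `f` of variation norm at most `R` in `𝒦₁(ℙ_{k^ℓ}^d)` is approximated
in `L²(𝔹ᵈ)` by the deep ReLU^k class of depth `L`, widths `2(k+1)n`, and weight bound
`B = (k/2+1)⁴`, with error at most `C R n^{−1/2 − (2K+1)/(2d)}`. -/
theorem deep_relupow_adaptive_unknown_regularity (d k K : ℕ)
    (hd : 0 < d) (hk : 2 ≤ k) (hK : 0 < K)
    (L : ℕ) (hL : 0 < L) (hLℓ : Nat.clog k K ≤ L) :
    K ≤ k ^ (Nat.clog k K) ∧
    ∃ C : ℝ, 0 < C ∧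
      ∀ n : ℕ, 0 < n →
        ∀ (f : (Fin d → ℝ) → ℝ) (R : ℝ),
          memVariationBall d (k ^ (Nat.clog k K)) R f →
          (⨅ g ∈ DeepReLUkClass k d (2 * (k + 1) * n) L (((k : ℝ) / 2 + 1) ^ 4),
              eLpNorm (f - g) 2
                (volume.restrict {x : Fin d → ℝ | ∑ i, (x i) ^ 2 ≤ 1}))
            ≤ ENNReal.ofReal (C * R *
                (n : ℝ) ^ (-(1 / 2 : ℝ) - (2 * (K : ℝ) + 1) / (2 * (d : ℝ)))) := by
  have hKM : K ≤ k ^ Nat.clog k K := Nat.le_pow_clog (by omega) K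
  refine ⟨hKM, ?_⟩
  obtain ⟨C, hC, hrate⟩ := AdaptiveReLU.exists_rate (M := k ^ Nat.clog k K) hd hk hL
    (Nat.one_le_pow _ _ (by omega)) hKM (Nat.pow_le_pow_right (by omega) hLℓ)
  refine ⟨C, hC, fun n hn f R hf => ?_⟩
  refine ENNReal.le_of_forall_pos_le_add fun ε hε _ => ?_
  have hε2 : (0 : ℝ) < ε / 2 := by exact_mod_cast half_pos hε
  -- `p = ∑ a_j h_j` is close to `f`, and the network `g` is close to `p`
  obtain ⟨m, a, h, hh, ha, hfp⟩ := hf (ε / 2) hε2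
  obtain ⟨g, hg, hgm, hpg⟩ := hrate n hn m a h R hh ha (ε / 2) hε2
  have hpm : Measurable fun x => ∑ j, a j * h j x := by
    refine Finset.measurable_fun_sum _ fun j _ => Measurable.const_mul ?_ _
    obtain ⟨θ, -, -, h2⟩ := AdaptiveReLU.exists_param_of_dict (hh j)
    rw [h2]
    exact (AdaptiveReLU.continuous_neuron (Nat.one_le_pow _ _ (by omega)) θ).measurable
  -- `f` need not be measurable, but `p - g` is, which suffices for the triangle inequality
  refine (iInf₂_le g hg).trans ?_
  have hsplit : f - g = (f - fun x => ∑ j, a j * h j x) + ((fun x => ∑ j, a j * h j x) - g) := by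
    abel
  rw [hsplit]
  refine (AdaptiveReLU.eLpNorm_add_le_of_right (hpm.sub hgm)).trans ((add_le_add hfp hpg).trans_eq ?_)
  rw [add_comm, add_assoc, ← ENNReal.ofReal_add hε2.le hε2.le, add_halves,
    ENNReal.ofReal_coe_nnreal]
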